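/- Let K be a connected abstract simplicial complex with weight function w. If κ(F, F') ≥ k for every pair of connected i-faces F ~ F' and some real number k, then κ(F, F') ≥ k for every pair of distinct i-faces F, F' of K. -/

import Mathlib

/-!
The measures `m_F^ε` have total mass one and are affine in `ε`, with `m_F^0 = δ_F`. Mixing a coupling
of `m_F^ε, m_{F'}^ε` with the coupling of `δ_F, δ_{F'}` shows that `κ_ε(F, F') / ε` is antitone in
`ε ∈ (0, 1]` (`kappaEps_div_antitone`). Testing couplings against the `1`-Lipschitz function
`d(·, F')` gives `W(m_F^ε, m_{F'}^ε) ≥ d(F, F') - C ε`, so `κ_ε / ε` is bounded above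
(`exists_wass_lower`). Hence the limit defining `κ(F, F')` exists (`tendsto_ricci`), which matters
because `limUnder` has a junk value otherwise.

For `δ > 0`, the hypothesis yields `W(m_G^ε, m_{G'}^ε) ≤ 1 - ε (k - δ)` for connected `G ~ G'` and all
small `ε > 0`. The triangle inequality for `W` (`wass_triangle`, by gluing couplings) along a shortest
path of length `d = d(F, F')` gives `W(m_F^ε, m_{F'}^ε) ≤ d (1 - ε (k - δ))`, that is
`κ_ε(F, F') / ε ≥ k - δ`. Letting `ε → 0` and then `δ → 0` finishes the proof.
-/


open Finset Filter

namespace SCRicci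

variable {V : Type*}

/-- `K` is an abstract simplicial complex: faces are nonempty finite sets and
nonempty subsets of faces are again faces. -/
def IsComplex [DecidableEq V] (K : Finset (Finset V)) : Prop :=
  ∀ F ∈ K, F.Nonempty ∧ ∀ E : Finset V, E ⊆ F → E.Nonempty → E ∈ K

/-- The set `S_i(K)` of `i`-faces of `K` (faces of cardinality `i+1`). -/
def faces [DecidableEq V] (K : Finset (Finset V)) (i : ℕ) : Finset (Finset V) :=
  K.filter fun F => F.card = i + 1

/-- Two `i`-faces are connected, `F ~ F'`, if they are distinct and share a common
`(i-1)`-face, which is necessarily `F ∩ F'`. -/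
def Conn [DecidableEq V] (i : ℕ) (F F' : Finset V) : Prop :=
  F ≠ F' ∧ (F ∩ F').card = i

noncomputable section

/-- The degree of an `(i-1)`-face `E`: the sum of the weights of the `i`-faces
containing `E`. -/
def deg [DecidableEq V] (K : Finset (Finset V)) (w : Finset V → ℝ) (i : ℕ)
    (E : Finset V) : ℝ :=
  ∑ F ∈ faces K i, if E ⊆ F then w F else 0

/-- `Chain K i n F F'`: there is a path of length `n` of consecutively connected
`i`-faces from `F` to `F'`. -/
def Chain [DecidableEq V] (K : Finset (Finset V)) (i : ℕ) :
    ℕ → Finset V → Finset V → Prop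
  | 0, F, F' => F = F'
  | n + 1, F, F' => ∃ G ∈ faces K i, Conn i F G ∧ Chain K i n G F'

/-- The distance between two `i`-faces: the length of a shortest path of
consecutively connected `i`-faces. -/
def fdist [DecidableEq V] (K : Finset (Finset V)) (i : ℕ) (F F' : Finset V) : ℕ :=
  sInf {n | Chain K i n F F'}

/-- `K` is connected in dimension `i`: any two `i`-faces are joined by a path of
consecutively connected `i`-faces. -/
def ComplexConnected [DecidableEq V] (K : Finset (Finset V)) (i : ℕ) : Prop :=
  ∀ F ∈ faces K i, ∀ F' ∈ faces K i, ∃ n, Chain K i n F F'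

/-- The probability measure `m_F^ε` on the `i`-faces of `K`. -/
def pm [DecidableEq V] (K : Finset (Finset V)) (w : Finset V → ℝ) (i : ℕ) (ε : ℝ)
    (F F' : Finset V) : ℝ :=
  if F' = F then
    1 - ε + ε / ((i : ℝ) + 1) * ∑ E ∈ F.powersetCard i, w F / deg K w i E
  else if F' ∈ faces K i ∧ (F ∩ F').card = i then
    ε * w F' / (((i : ℝ) + 1) * deg K w i (F ∩ F'))
  else 0

/-- The 1-Wasserstein distance between two measures on the `i`-faces of `K`:
the infimum of the transport cost over all couplings. -/
def Wass [DecidableEq V] (K : Finset (Finset V)) (i : ℕ) (μ ν : Finset V → ℝ) : ℝ :=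
  sInf {c : ℝ | ∃ A : Finset V → Finset V → ℝ,
    (∀ F₁ F₂, 0 ≤ A F₁ F₂) ∧
    (∀ F₁ ∈ faces K i, ∑ F₂ ∈ faces K i, A F₁ F₂ = μ F₁) ∧
    (∀ F₂ ∈ faces K i, ∑ F₁ ∈ faces K i, A F₁ F₂ = ν F₂) ∧
    c = ∑ F₁ ∈ faces K i, ∑ F₂ ∈ faces K i, A F₁ F₂ * (fdist K i F₁ F₂ : ℝ)}

/-- The `ε`-Ricci curvature of two distinct `i`-faces:
`κ_ε(F, F') = 1 - W(m_F^ε, m_{F'}^ε) / d(F, F')`. -/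
def kappaEps [DecidableEq V] (K : Finset (Finset V)) (w : Finset V → ℝ) (i : ℕ)
    (ε : ℝ) (F F' : Finset V) : ℝ :=
  1 - Wass K i (pm K w i ε F) (pm K w i ε F') / (fdist K i F F' : ℝ)

/-- The Ricci curvature `κ(F, F')`: the limit of `κ_ε(F, F') / ε` as `ε → 0+`. -/
def ricci [DecidableEq V] (K : Finset (Finset V)) (w : Finset V → ℝ) (i : ℕ)
    (F F' : Finset V) : ℝ :=
  limUnder (nhdsWithin (0 : ℝ) (Set.Ioi 0)) fun ε => kappaEps K w i ε F F' / ε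

/-! ### The distance between faces -/

lemma fdist_self [DecidableEq V] (K : Finset (Finset V)) (i : ℕ) (F : Finset V) :
    fdist K i F F = 0 :=
  Nat.sInf_eq_zero.2 (Or.inl (show Chain K i 0 F F from rfl))

lemma fdist_le [DecidableEq V] {K : Finset (Finset V)} {i n : ℕ} {F F' : Finset V}
    (h : Chain K i n F F') : fdist K i F F' ≤ n :=
  Nat.sInf_le h

lemma chain_fdist [DecidableEq V] {K : Finset (Finset V)} {i : ℕ}
    (hconn : ComplexConnected K i) {F F' : Finset V} (hF : F ∈ faces K i)
    (hF' : F' ∈ faces K i) : Chain K i (fdist K i F F') F F' :=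
  Nat.sInf_mem (s := {n | Chain K i n F F'}) (hconn F hF F' hF')

lemma chain_trans [DecidableEq V] {K : Finset (Finset V)} {i : ℕ} {H F' : Finset V} {m : ℕ}
    (h : Chain K i m H F') : ∀ {n : ℕ} {F : Finset V}, Chain K i n F H → Chain K i (n + m) F F'
  | 0, F, h0 => by
    have : F = H := h0
    subst this
    simpa using h
  | n + 1, F, h0 => by
    obtain ⟨G, hG, hc, h1⟩ := h0
    rw [Nat.add_right_comm]
    exact ⟨G, hG, hc, chain_trans h h1⟩

lemma fdist_triangle [DecidableEq V] {K : Finset (Finset V)} {i : ℕ}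
    (hconn : ComplexConnected K i) {F G H : Finset V} (hF : F ∈ faces K i)
    (hG : G ∈ faces K i) (hH : H ∈ faces K i) :
    fdist K i F H ≤ fdist K i F G + fdist K i G H :=
  fdist_le (chain_trans (chain_fdist hconn hG hH) (chain_fdist hconn hF hG))

lemma fdist_pos [DecidableEq V] {K : Finset (Finset V)} {i : ℕ}
    (hconn : ComplexConnected K i) {F F' : Finset V} (hF : F ∈ faces K i)
    (hF' : F' ∈ faces K i) (hne : F ≠ F') : 0 < fdist K i F F' := by
  rcases Nat.eq_zero_or_pos (fdist K i F F') with h | h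
  · have := chain_fdist hconn hF hF'
    rw [h] at this
    exact absurd this hne
  · exact h

lemma fdist_conn [DecidableEq V] {K : Finset (Finset V)} {i : ℕ}
    (hconn : ComplexConnected K i) {F F' : Finset V} (hF : F ∈ faces K i)
    (hF' : F' ∈ faces K i) (hc : Conn i F F') : fdist K i F F' = 1 := by
  have h1 : fdist K i F F' ≤ 1 := fdist_le ⟨F', hF', hc, rfl⟩
  have h2 := fdist_pos hconn hF hF' hc.1
  omega

/-! ### Couplings and the Wasserstein distance -/

/-- `A` is a coupling of `μ` and `ν`, in the sense used in the definition of `Wass`: marginals are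
prescribed on the `i`-faces only, nonnegativity is required everywhere. -/
def IsCoupling [DecidableEq V] (K : Finset (Finset V)) (i : ℕ) (μ ν : Finset V → ℝ)
    (A : Finset V → Finset V → ℝ) : Prop :=
  (∀ F₁ F₂, 0 ≤ A F₁ F₂) ∧
  (∀ F₁ ∈ faces K i, ∑ F₂ ∈ faces K i, A F₁ F₂ = μ F₁) ∧
  (∀ F₂ ∈ faces K i, ∑ F₁ ∈ faces K i, A F₁ F₂ = ν F₂)

/-- The transport cost of `A` with respect to the face distance. -/
def cost [DecidableEq V] (K : Finset (Finset V)) (i : ℕ) (A : Finset V → Finset V → ℝ) : ℝ :=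
  ∑ F₁ ∈ faces K i, ∑ F₂ ∈ faces K i, A F₁ F₂ * (fdist K i F₁ F₂ : ℝ)

lemma wass_le [DecidableEq V] {K : Finset (Finset V)} {i : ℕ} {μ ν : Finset V → ℝ}
    {A : Finset V → Finset V → ℝ} (hA : IsCoupling K i μ ν A) : Wass K i μ ν ≤ cost K i A := by
  refine csInf_le ⟨0, ?_⟩ ⟨A, hA.1, hA.2.1, hA.2.2, rfl⟩
  rintro c ⟨B, hB, -, -, rfl⟩
  exact Finset.sum_nonneg fun x _ => Finset.sum_nonneg fun y _ =>
    mul_nonneg (hB x y) (Nat.cast_nonneg _)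

lemma le_wass [DecidableEq V] {K : Finset (Finset V)} {i : ℕ} {μ ν : Finset V → ℝ} {c : ℝ}
    (hne : ∃ A, IsCoupling K i μ ν A) (h : ∀ A, IsCoupling K i μ ν A → c ≤ cost K i A) :
    c ≤ Wass K i μ ν := by
  obtain ⟨A, hA⟩ := hne
  refine le_csInf ⟨_, A, hA.1, hA.2.1, hA.2.2, rfl⟩ ?_
  rintro c ⟨B, h1, h2, h3, rfl⟩
  exact h B ⟨h1, h2, h3⟩

lemma exists_coupling_lt [DecidableEq V] {K : Finset (Finset V)} {i : ℕ} {μ ν : Finset V → ℝ}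
    {c : ℝ} (hne : ∃ A, IsCoupling K i μ ν A) (h : Wass K i μ ν < c) :
    ∃ A, IsCoupling K i μ ν A ∧ cost K i A < c := by
  by_contra! hcon
  exact absurd h (not_lt.2 (le_wass hne hcon))

lemma isCoupling_prod [DecidableEq V] {K : Finset (Finset V)} {i : ℕ} {μ ν : Finset V → ℝ}
    (hμ : ∀ x, 0 ≤ μ x) (hν : ∀ x, 0 ≤ ν x) (hμ1 : ∑ x ∈ faces K i, μ x = 1)
    (hν1 : ∑ x ∈ faces K i, ν x = 1) : IsCoupling K i μ ν fun x y => μ x * ν y := by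
  refine ⟨fun x y => mul_nonneg (hμ x) (hν y), fun x _ => ?_, fun y _ => ?_⟩
  · rw [← Finset.mul_sum, hν1, mul_one]
  · rw [← Finset.sum_mul, hμ1, one_mul]

lemma wass_self_le [DecidableEq V] {K : Finset (Finset V)} {i : ℕ} {μ : Finset V → ℝ}
    (hμ : ∀ x, 0 ≤ μ x) : Wass K i μ μ ≤ 0 := by
  have hA : IsCoupling K i μ μ fun x y => if x = y then μ x else 0 := by
    refine ⟨fun x y => ?_, fun x hx => ?_, fun y hy => ?_⟩
    · dsimp only
      split_ifs
      exacts [hμ x, le_rfl]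
    · simp [hx]
    · simp [hy]
  refine (wass_le hA).trans (le_of_eq ?_)
  refine Finset.sum_eq_zero fun x _ => Finset.sum_eq_zero fun y _ => ?_
  by_cases h : x = y
  · subst h
    simp [fdist_self]
  · simp [h]

/-- The cost of a glued coupling: `A` and `B` are glued along `ν` through the three-fold measure
`A x y * B y z / ν y`, whose two-dimensional marginals are `A` and `B`. -/
lemma wass_le_cost_add [DecidableEq V] {K : Finset (Finset V)} {i : ℕ}
    (hconn : ComplexConnected K i) {μ ν ρ : Finset V → ℝ} {A B : Finset V → Finset V → ℝ}
    (hν : ∀ x, 0 ≤ ν x) (hA : IsCoupling K i μ ν A) (hB : IsCoupling K i ν ρ B) :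
    Wass K i μ ρ ≤ cost K i A + cost K i B := by
  set S := faces K i with hS
  have hT1 : ∀ x ∈ S, ∀ y ∈ S, ∑ z ∈ S, A x y * B y z / ν y = A x y := by
    intro x hx y hy
    rw [← Finset.sum_div, ← Finset.mul_sum, hB.2.1 y hy]
    by_cases h0 : ν y = 0
    · have h1 := hA.2.2 y hy
      rw [h0, Finset.sum_eq_zero_iff_of_nonneg fun x _ => hA.1 x y] at h1
      simp [h1 x hx]
    · field_simp
  have hT2 : ∀ y ∈ S, ∀ z ∈ S, ∑ x ∈ S, A x y * B y z / ν y = B y z := by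
    intro y hy z hz
    rw [← Finset.sum_div, ← Finset.sum_mul, hA.2.2 y hy]
    by_cases h0 : ν y = 0
    · have h1 := hB.2.1 y hy
      rw [h0, Finset.sum_eq_zero_iff_of_nonneg fun z _ => hB.1 y z] at h1
      simp [h1 z hz]
    · field_simp
  have hC : IsCoupling K i μ ρ fun x z => ∑ y ∈ S, A x y * B y z / ν y := by
    refine ⟨fun x z => Finset.sum_nonneg fun y _ =>
      div_nonneg (mul_nonneg (hA.1 x y) (hB.1 y z)) (hν y), fun x hx => ?_, fun z hz => ?_⟩
    · rw [Finset.sum_comm, ← hA.2.1 x hx]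
      exact Finset.sum_congr rfl fun y hy => hT1 x hx y hy
    · rw [Finset.sum_comm, ← hB.2.2 z hz]
      exact Finset.sum_congr rfl fun y hy => hT2 y hy z hz
  refine (wass_le hC).trans ?_
  have hle : cost K i (fun x z => ∑ y ∈ S, A x y * B y z / ν y) ≤
      ∑ x ∈ S, ∑ z ∈ S, ∑ y ∈ S, (A x y * B y z / ν y * (fdist K i x y : ℝ)
        + A x y * B y z / ν y * (fdist K i y z : ℝ)) := by
    refine Finset.sum_le_sum fun x hx => Finset.sum_le_sum fun z hz => ?_
    rw [Finset.sum_mul]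
    refine Finset.sum_le_sum fun y hy => ?_
    rw [← mul_add]
    refine mul_le_mul_of_nonneg_left ?_ (div_nonneg (mul_nonneg (hA.1 x y) (hB.1 y z)) (hν y))
    exact_mod_cast fdist_triangle hconn hx hy hz
  refine hle.trans (le_of_eq ?_)
  simp only [Finset.sum_add_distrib]
  congr 1
  · refine Finset.sum_congr rfl fun x hx => ?_
    rw [Finset.sum_comm]
    refine Finset.sum_congr rfl fun y hy => ?_
    rw [← Finset.sum_mul, hT1 x hx y hy]
  · rw [Finset.sum_congr rfl fun x _ => Finset.sum_comm, Finset.sum_comm]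
    refine Finset.sum_congr rfl fun y hy => ?_
    rw [Finset.sum_comm]
    refine Finset.sum_congr rfl fun z hz => ?_
    rw [← Finset.sum_mul, hT2 y hy z hz]

lemma wass_triangle [DecidableEq V] {K : Finset (Finset V)} {i : ℕ}
    (hconn : ComplexConnected K i) {μ ν ρ : Finset V → ℝ} (hν : ∀ x, 0 ≤ ν x)
    (h1 : ∃ A, IsCoupling K i μ ν A) (h2 : ∃ B, IsCoupling K i ν ρ B) :
    Wass K i μ ρ ≤ Wass K i μ ν + Wass K i ν ρ := by
  refine le_of_forall_pos_le_add fun δ hδ => ?_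
  obtain ⟨A, hA, hA'⟩ := exists_coupling_lt h1 (lt_add_of_pos_right _ (half_pos hδ))
  obtain ⟨B, hB, hB'⟩ := exists_coupling_lt h2 (lt_add_of_pos_right _ (half_pos hδ))
  have := wass_le_cost_add hconn hν hA hB
  linarith

/-! ### The measures `m_F^ε` -/

lemma deg_pos [DecidableEq V] {K : Finset (Finset V)} {i : ℕ} {w : Finset V → ℝ}
    (hwpos : ∀ F ∈ K, 0 < w F) {E F : Finset V} (hF : F ∈ faces K i) (hE : E ⊆ F) :
    0 < deg K w i E := by
  have hw : ∀ G ∈ faces K i, 0 < w G := fun G hG => hwpos G (Finset.mem_filter.1 hG).1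
  refine Finset.sum_pos' (fun G hG => ?_) ⟨F, hF, ?_⟩
  · split_ifs
    exacts [(hw G hG).le, le_rfl]
  · rw [if_pos hE]
    exact hw F hF

lemma pm_affine [DecidableEq V] (K : Finset (Finset V)) (w : Finset V → ℝ) (i : ℕ) (ε : ℝ)
    (F x : Finset V) :
    pm K w i ε F x = pm K w i 0 F x + ε * (pm K w i 1 F x - pm K w i 0 F x) := by
  unfold pm
  split_ifs <;> ring

lemma pm_zero [DecidableEq V] (K : Finset (Finset V)) (w : Finset V → ℝ) (i : ℕ)
    (F x : Finset V) : pm K w i 0 F x = if x = F then 1 else 0 := by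
  simp [pm]

lemma pm_nonneg [DecidableEq V] {K : Finset (Finset V)} {i : ℕ} {w : Finset V → ℝ}
    (hwpos : ∀ F ∈ K, 0 < w F) {F : Finset V} (hF : F ∈ faces K i) {ε : ℝ} (h0 : 0 ≤ ε)
    (h1 : ε ≤ 1) (x : Finset V) : 0 ≤ pm K w i ε F x := by
  have hw : ∀ G ∈ faces K i, 0 < w G := fun G hG => hwpos G (Finset.mem_filter.1 hG).1
  unfold pm
  split_ifs with h2 h3
  · refine add_nonneg (by linarith) (mul_nonneg (by positivity) (Finset.sum_nonneg fun E hE => ?_))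
    exact div_nonneg (hw F hF).le (deg_pos hwpos hF (Finset.mem_powersetCard.1 hE).1).le
  · exact div_nonneg (mul_nonneg h0 (hw x h3.1).le)
      (mul_nonneg (by positivity) (deg_pos hwpos hF Finset.inter_subset_left).le)
  · exact le_rfl

/-- Summing `w x / deg E` over the facets `E` of `F` contained in a face `x ≠ F` leaves at most the
single term `E = F ∩ x`. -/
lemma sum_facets_of_ne [DecidableEq V] {K : Finset (Finset V)} {i : ℕ} (w : Finset V → ℝ)
    {F x : Finset V} (hF : F ∈ faces K i) (hx : x ∈ faces K i) (hne : x ≠ F) :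
    ∑ E ∈ F.powersetCard i, (if E ⊆ x then w x / deg K w i E else 0) =
      if (F ∩ x).card = i then w x / deg K w i (F ∩ x) else 0 := by
  have hFc : F.card = i + 1 := (Finset.mem_filter.1 hF).2
  have hxc : x.card = i + 1 := (Finset.mem_filter.1 hx).2
  have hlt : (F ∩ x).card ≤ i := by
    by_contra! h
    have e1 : F ∩ x = F := Finset.eq_of_subset_of_card_le Finset.inter_subset_left (by omega)
    have e2 : F ∩ x = x := Finset.eq_of_subset_of_card_le Finset.inter_subset_right (by omega)
    exact hne (e2.symm.trans e1)
  have key : ∀ E ∈ F.powersetCard i, E ⊆ x → E = F ∩ x := by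
    intro E hE hEx
    obtain ⟨h1, h2⟩ := Finset.mem_powersetCard.1 hE
    exact Finset.eq_of_subset_of_card_le (Finset.subset_inter h1 hEx) (by omega)
  split_ifs with hc
  · rw [Finset.sum_eq_single (F ∩ x)]
    · rw [if_pos Finset.inter_subset_right]
    · intro E hE hne'
      exact if_neg fun h => hne' (key E hE h)
    · intro h
      exact absurd (Finset.mem_powersetCard.2 ⟨Finset.inter_subset_left, hc⟩) h
  · refine Finset.sum_eq_zero fun E hE => if_neg fun h => hc ?_
    rw [← key E hE h]
    exact (Finset.mem_powersetCard.1 hE).2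

lemma pm_sum [DecidableEq V] {K : Finset (Finset V)} {i : ℕ} {w : Finset V → ℝ}
    (hwpos : ∀ F ∈ K, 0 < w F) {F : Finset V} (hF : F ∈ faces K i) (ε : ℝ) :
    ∑ x ∈ faces K i, pm K w i ε F x = 1 := by
  have hFc : F.card = i + 1 := (Finset.mem_filter.1 hF).2
  have hi : ((i : ℝ) + 1) ≠ 0 := by positivity
  have h1 : ∀ x ∈ faces K i, pm K w i ε F x = (1 - ε) * (if x = F then 1 else 0) +
      ε / ((i : ℝ) + 1) *
        ∑ E ∈ F.powersetCard i, (if E ⊆ x then w x / deg K w i E else 0) := by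
    intro x hx
    by_cases h : x = F
    · subst h
      rw [pm, if_pos rfl, if_pos rfl, mul_one]
      congr 2
      refine Finset.sum_congr rfl fun E hE => ?_
      rw [if_pos (Finset.mem_powersetCard.1 hE).1]
    · rw [sum_facets_of_ne w hF hx h, pm, if_neg h, if_neg h]
      by_cases hc : (F ∩ x).card = i
      · have := (deg_pos hwpos hF (Finset.inter_subset_left (s₂ := x))).ne'
        rw [if_pos ⟨hx, hc⟩, if_pos hc]
        field_simp
        ring
      · rw [if_neg fun h => hc h.2, if_neg hc]
        ring
  rw [Finset.sum_congr rfl h1, Finset.sum_add_distrib, ← Finset.mul_sum, ← Finset.mul_sum,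
    Finset.sum_comm]
  have h2 : ∀ E ∈ F.powersetCard i,
      ∑ x ∈ faces K i, (if E ⊆ x then w x / deg K w i E else 0) = 1 := by
    intro E hE
    have hd := (deg_pos hwpos hF (Finset.mem_powersetCard.1 hE).1).ne'
    rw [← div_self hd]
    conv_rhs => rw [deg, Finset.sum_div]
    refine Finset.sum_congr rfl fun x _ => ?_
    split_ifs
    · rfl
    · simp
  rw [Finset.sum_congr rfl h2]
  simp [hF, hFc]
  field_simp
  ring

lemma exists_coupling_pm [DecidableEq V] {K : Finset (Finset V)} {i : ℕ} {w : Finset V → ℝ}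
    (hwpos : ∀ F ∈ K, 0 < w F) {F F' : Finset V} (hF : F ∈ faces K i) (hF' : F' ∈ faces K i)
    {ε : ℝ} (h0 : 0 ≤ ε) (h1 : ε ≤ 1) :
    ∃ A, IsCoupling K i (pm K w i ε F) (pm K w i ε F') A :=
  ⟨_, isCoupling_prod (pm_nonneg hwpos hF h0 h1) (pm_nonneg hwpos hF' h0 h1)
    (pm_sum hwpos hF ε) (pm_sum hwpos hF' ε)⟩

/-! ### Existence of the limit defining the Ricci curvature -/

/-- Mixing couplings at `ε` with the coupling of the Dirac masses at `F` and `F'`. -/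
lemma wass_mix [DecidableEq V] {K : Finset (Finset V)} {i : ℕ} {w : Finset V → ℝ}
    (hwpos : ∀ F ∈ K, 0 < w F) {F F' : Finset V} (hF : F ∈ faces K i) (hF' : F' ∈ faces K i)
    {ε t : ℝ} (h0 : 0 ≤ ε) (h1 : ε ≤ 1) (ht0 : 0 < t) (ht1 : t ≤ 1) :
    Wass K i (pm K w i (t * ε) F) (pm K w i (t * ε) F') ≤
      t * Wass K i (pm K w i ε F) (pm K w i ε F') + (1 - t) * (fdist K i F F' : ℝ) := by
  have hpm : ∀ G x, pm K w i (t * ε) G x = t * pm K w i ε G x + (1 - t) * pm K w i 0 G x := by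
    intro G x
    rw [pm_affine K w i (t * ε), pm_affine K w i ε]
    ring
  have hD : IsCoupling K i (pm K w i 0 F) (pm K w i 0 F')
      fun x y => pm K w i 0 F x * pm K w i 0 F' y :=
    isCoupling_prod (pm_nonneg hwpos hF le_rfl zero_le_one)
      (pm_nonneg hwpos hF' le_rfl zero_le_one) (pm_sum hwpos hF 0) (pm_sum hwpos hF' 0)
  have hDc : cost K i (fun x y => pm K w i 0 F x * pm K w i 0 F' y) = fdist K i F F' := by
    simp [cost, pm_zero, hF, hF']
  suffices h : (Wass K i (pm K w i (t * ε) F) (pm K w i (t * ε) F')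
      - (1 - t) * (fdist K i F F' : ℝ)) / t ≤ Wass K i (pm K w i ε F) (pm K w i ε F') by
    rw [div_le_iff₀ ht0] at h
    linarith
  refine le_wass (exists_coupling_pm hwpos hF hF' h0 h1) fun A hA => ?_
  rw [div_le_iff₀ ht0, sub_le_iff_le_add]
  have hM : IsCoupling K i (pm K w i (t * ε) F) (pm K w i (t * ε) F')
      fun x y => t * A x y + (1 - t) * (pm K w i 0 F x * pm K w i 0 F' y) := by
    refine ⟨fun x y => add_nonneg (mul_nonneg ht0.le (hA.1 x y))
      (mul_nonneg (by linarith) (hD.1 x y)), fun x hx => ?_, fun y hy => ?_⟩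
    · rw [Finset.sum_add_distrib, ← Finset.mul_sum, ← Finset.mul_sum, hA.2.1 x hx,
        hD.2.1 x hx, hpm]
    · rw [Finset.sum_add_distrib, ← Finset.mul_sum, ← Finset.mul_sum, hA.2.2 y hy,
        hD.2.2 y hy, hpm]
  refine (wass_le hM).trans (le_of_eq ?_)
  rw [← hDc, mul_comm (cost K i A) t]
  simp only [cost, Finset.mul_sum, ← Finset.sum_add_distrib]
  refine Finset.sum_congr rfl fun x _ => Finset.sum_congr rfl fun y _ => ?_
  ring

lemma kappaEps_div_antitone [DecidableEq V] {K : Finset (Finset V)} {i : ℕ} {w : Finset V → ℝ}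
    (hconn : ComplexConnected K i)
    (hwpos : ∀ F ∈ K, 0 < w F) {F F' : Finset V} (hF : F ∈ faces K i) (hF' : F' ∈ faces K i)
    (hne : F ≠ F') {s ε : ℝ} (hs : 0 < s) (hse : s ≤ ε) (h1 : ε ≤ 1) :
    kappaEps K w i ε F F' / ε ≤ kappaEps K w i s F F' / s := by
  have hε : 0 < ε := hs.trans_le hse
  have hd : (0 : ℝ) < fdist K i F F' := by exact_mod_cast fdist_pos hconn hF hF' hne
  have h := wass_mix hwpos hF hF' hε.le h1 (div_pos hs hε) ((div_le_one hε).2 hse)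
  rw [div_mul_cancel₀ _ hε.ne'] at h
  rw [div_le_div_iff₀ hε hs]
  unfold kappaEps
  set W := Wass K i (pm K w i ε F) (pm K w i ε F')
  set W' := Wass K i (pm K w i s F) (pm K w i s F')
  set d : ℝ := (fdist K i F F' : ℝ)
  have h' : W' * ε ≤ s * W + (ε - s) * d := by
    have := mul_le_mul_of_nonneg_right h hε.le
    have e : (s / ε * W + (1 - s / ε) * d) * ε = s * W + (ε - s) * d := by
      field_simp
    linarith
  have h2 : W' * ε / d ≤ (s * W + (ε - s) * d) / d := div_le_div_of_nonneg_right h' hd.le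
  have e2 : (s * W + (ε - s) * d) / d = s * (W / d) + (ε - s) := by
    field_simp
  have e3 : W' * ε / d = W' / d * ε := by ring
  rw [e2, e3] at h2
  linarith

/-- The weak half of Kantorovich duality for the `1`-Lipschitz function `d(·, F')`. -/
lemma exists_wass_lower [DecidableEq V] {K : Finset (Finset V)} {i : ℕ} {w : Finset V → ℝ}
    (hconn : ComplexConnected K i)
    (hwpos : ∀ F ∈ K, 0 < w F) {F F' : Finset V} (hF : F ∈ faces K i) (hF' : F' ∈ faces K i) :
    ∃ C : ℝ, ∀ ε : ℝ, 0 ≤ ε → ε ≤ 1 →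
      (fdist K i F F' : ℝ) - C * ε ≤ Wass K i (pm K w i ε F) (pm K w i ε F') := by
  set g : Finset V → ℝ := fun x => (fdist K i x F' : ℝ) with hg
  have hsum : ∀ G ∈ faces K i, ∀ ε : ℝ, ∑ x ∈ faces K i, pm K w i ε G x * g x =
      g G + ε * ∑ x ∈ faces K i, (pm K w i 1 G x - pm K w i 0 G x) * g x := by
    intro G hG ε
    have e : g G = ∑ x ∈ faces K i, pm K w i 0 G x * g x := by simp [pm_zero, hG]
    rw [e, Finset.mul_sum, ← Finset.sum_add_distrib]
    refine Finset.sum_congr rfl fun x _ => ?_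
    rw [pm_affine K w i ε]
    ring
  refine ⟨∑ x ∈ faces K i, (pm K w i 1 F' x - pm K w i 0 F' x) * g x -
    ∑ x ∈ faces K i, (pm K w i 1 F x - pm K w i 0 F x) * g x, fun ε h0 h1 => ?_⟩
  refine le_wass (exists_coupling_pm hwpos hF hF' h0 h1) fun A hA => ?_
  have h2 : ∑ x ∈ faces K i, pm K w i ε F x * g x - ∑ y ∈ faces K i, pm K w i ε F' y * g y ≤
      cost K i A := by
    have e1 : ∑ x ∈ faces K i, pm K w i ε F x * g x =
        ∑ x ∈ faces K i, ∑ y ∈ faces K i, A x y * g x :=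
      Finset.sum_congr rfl fun x hx => by rw [← hA.2.1 x hx, Finset.sum_mul]
    have e2 : ∑ y ∈ faces K i, pm K w i ε F' y * g y =
        ∑ x ∈ faces K i, ∑ y ∈ faces K i, A x y * g y := by
      rw [Finset.sum_comm]
      exact Finset.sum_congr rfl fun y hy => by rw [← hA.2.2 y hy, Finset.sum_mul]
    rw [e1, e2, ← Finset.sum_sub_distrib]
    refine Finset.sum_le_sum fun x hx => ?_
    rw [← Finset.sum_sub_distrib]
    refine Finset.sum_le_sum fun y hy => ?_
    rw [← mul_sub]
    refine mul_le_mul_of_nonneg_left ?_ (hA.1 x y)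
    have : g x ≤ (fdist K i x y : ℝ) + g y := by
      simp only [hg]
      exact_mod_cast fdist_triangle hconn hx hy hF'
    linarith
  rw [hsum F hF, hsum F' hF'] at h2
  have e : g F' = 0 := by simp [hg, fdist_self]
  have e' : g F = (fdist K i F F' : ℝ) := rfl
  rw [e, e'] at h2
  linarith

lemma tendsto_ricci [DecidableEq V] {K : Finset (Finset V)} {i : ℕ} {w : Finset V → ℝ}
    (hconn : ComplexConnected K i)
    (hwpos : ∀ F ∈ K, 0 < w F) {F F' : Finset V} (hF : F ∈ faces K i) (hF' : F' ∈ faces K i)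
    (hne : F ≠ F') :
    Tendsto (fun ε => kappaEps K w i ε F F' / ε) (nhdsWithin (0 : ℝ) (Set.Ioi 0))
      (nhds (ricci K w i F F')) := by
  have hd : (0 : ℝ) < fdist K i F F' := by exact_mod_cast fdist_pos hconn hF hF' hne
  obtain ⟨C, hC⟩ := exists_wass_lower hconn hwpos hF hF'
  have hmono : MonotoneOn (fun ε => -(kappaEps K w i ε F F' / ε)) (Set.Ioo (0 : ℝ) 1) :=
    fun s hs ε hε hse =>
      neg_le_neg (kappaEps_div_antitone hconn hwpos hF hF' hne hs.1 hse hε.2.le)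
  have hbdd : BddBelow ((fun ε => -(kappaEps K w i ε F F' / ε)) '' Set.Ioo (0 : ℝ) 1) := by
    refine ⟨-(C / fdist K i F F'), ?_⟩
    rintro _ ⟨ε, hε, rfl⟩
    refine neg_le_neg ?_
    rw [div_le_iff₀ hε.1]
    have h := div_le_div_of_nonneg_right (hC ε hε.1.le hε.2.le) hd.le
    rw [sub_div, div_self hd.ne', mul_div_right_comm] at h
    unfold kappaEps
    linarith
  have h := (hmono.tendsto_nhdsWithin_Ioo_right ⟨1 / 2, by norm_num, by norm_num⟩ hbdd).neg
  simp only [neg_neg] at h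
  have e : ricci K w i F F' = _ := h.limUnder_eq
  rwa [e]

/-! ### Propagation along paths -/

/-- The triangle inequality along a path of length `n`, with asymptotic bounds on the single steps. -/
lemma eventually_wass_le_of_chain [DecidableEq V] {K : Finset (Finset V)} {i : ℕ}
    {w : Finset V → ℝ} (hconn : ComplexConnected K i) (hwpos : ∀ F ∈ K, 0 < w F) {c : ℝ}
    (hstep : ∀ F ∈ faces K i, ∀ F' ∈ faces K i, Conn i F F' → c < ricci K w i F F')
    {F' : Finset V} (hF' : F' ∈ faces K i) :
    ∀ (n : ℕ) (F : Finset V), F ∈ faces K i → Chain K i n F F' →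
      ∀ᶠ ε in nhdsWithin (0 : ℝ) (Set.Ioi 0),
        Wass K i (pm K w i ε F) (pm K w i ε F') ≤ n * (1 - ε * c) := by
  have hI : ∀ᶠ ε in nhdsWithin (0 : ℝ) (Set.Ioi 0), ε ∈ Set.Ioo (0 : ℝ) 1 :=
    Ioo_mem_nhdsGT zero_lt_one
  intro n
  induction n with
  | zero =>
    intro F hF h
    have : F = F' := h
    subst this
    filter_upwards [hI] with ε hε
    simpa using wass_self_le (pm_nonneg hwpos hF hε.1.le hε.2.le)
  | succ n ih =>
    rintro F hF ⟨G, hG, hc, hch⟩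
    have hlt := (tendsto_ricci hconn hwpos hF hG hc.1).eventually_const_lt (hstep F hF G hG hc)
    filter_upwards [hI, ih G hG hch, hlt] with ε hε h1 h2
    rw [lt_div_iff₀ hε.1, kappaEps, fdist_conn hconn hF hG hc, Nat.cast_one, div_one] at h2
    have h3 := wass_triangle hconn (pm_nonneg hwpos hG hε.1.le hε.2.le)
      (exists_coupling_pm hwpos hF hG hε.1.le hε.2.le)
      (exists_coupling_pm hwpos hG hF' hε.1.le hε.2.le)
    push_cast
    linarith

/-- If `κ(F, F') ≥ k` for every pair of connected `i`-faces
`F ~ F'`, then `κ(F, F') ≥ k` for every pair of distinct `i`-faces. -/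
theorem ricci_lower_bound_propagates {V : Type*} [Fintype V] [DecidableEq V]
    (K : Finset (Finset V)) (i : ℕ) (hi : 1 ≤ i)
    (hK : IsComplex K) (hconn : ComplexConnected K i)
    (w : Finset V → ℝ) (hwpos : ∀ F ∈ K, 0 < w F)
    (k : ℝ)
    (hk : ∀ F ∈ faces K i, ∀ F' ∈ faces K i, Conn i F F' → k ≤ ricci K w i F F') :
    ∀ F ∈ faces K i, ∀ F' ∈ faces K i, F ≠ F' → k ≤ ricci K w i F F' := by
  intro F hF F' hF' hne
  refine le_of_forall_pos_le_add fun δ hδ => ?_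
  have hd : (0 : ℝ) < fdist K i F F' := by exact_mod_cast fdist_pos hconn hF hF' hne
  have hev := eventually_wass_le_of_chain hconn hwpos (c := k - δ)
    (fun G hG G' hG' hc => by linarith [hk G hG G' hG' hc]) hF' _ F hF
    (chain_fdist hconn hF hF')
  have hle : k - δ ≤ ricci K w i F F' := by
    refine ge_of_tendsto (tendsto_ricci hconn hwpos hF hF' hne) ?_
    filter_upwards [hev, self_mem_nhdsWithin] with ε h hε
    have hε' : 0 < ε := hε
    rw [le_div_iff₀ hε', kappaEps]
    have h2 := (div_le_iff₀' hd).2 h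
    linarith
  linarith

end
end SCRicci
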